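/- Let T be a triangulation of a finite point set A ⊂ ℝ² whose convex hull is two-dimensional. For each integer i ≥ 3 let v_i denote the number of interior vertices of T of degree i, and for each integer j ≥ 2 let b_j denote the number of boundary vertices of T of degree j. Then |A| + 6 ≤ 4·v_3 + 3·v_4 + 2·v_5 + v_6 + 3·b_2 + 2·b_3 + b_4. -/

import Mathlib

/-!
Let `n` be the number of vertices, `h` the number of boundary vertices and `E` the number of edges.
Since the degrees sum to `2 E`, the edge bound `E ≤ 3 n - h - 3` gives that `7 - deg` summed over
the interior vertices plus `5 - deg` summed over the boundary vertices is at least `n + 6`.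
Interior vertices have degree at least `3` and boundary vertices at least `2`
(`three_le_degree`, `two_le_degree`), so discarding the nonpositive terms leaves exactly the
weighted count on the right-hand side.

Euler's formula is not available, and the edge bound (`edges_bound`) is proved by a horizontal
sweep instead. In a generic direction no two vertices have the same height, so each triangle has a
lowest, a middle and a highest vertex, and lies either to the left or to the right of its middle
vertex. Each vertex is the middle vertex of at most one triangle on either side
(`LeftMid.unique`), and if it has triangles on both sides then it is interior
(`mem_interior_of_left_right`). An edge either has a triangle along its left side
(`edge_cases`) or lies on the left boundary of the hull, where it is determined by its upper
endpoint (`closed_edge_unique_aux`). Charging each edge to the middle vertex of the triangle on its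
left, or to its upper endpoint if there is none (`card_edges_le`), gives at most three charges to an
interior vertex and at most two to a boundary vertex, with a total defect of three at the lowest and
highest vertices.
-/

open Geometry

/-- The Euclidean plane `ℝ²`. -/
abbrev Plane : Type := EuclideanSpace ℝ (Fin 2)

/-- A triangulation of a finite point set `A ⊆ ℝ²` (whose convex hull is two-dimensional):
a geometric simplicial complex all of whose faces have at most 3 elements, whose underlying
space is the convex hull of `A`, and whose vertex set is exactly `A`. -/
def IsTriangulation (A : Finset Plane) (T : SimplicialComplex ℝ Plane) : Prop :=
  (∀ s ∈ T.faces, s.card ≤ 3) ∧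
  T.space = convexHull ℝ (A : Set Plane) ∧
  T.vertices = (A : Set Plane)

/-- The degree of a vertex `p` in a triangulation `T`: the number of edges
(faces with exactly 2 elements) of `T` containing `p`. -/
noncomputable def degree (T : SimplicialComplex ℝ Plane) (p : Plane) : ℕ :=
  Nat.card {s : Finset Plane | s ∈ T.faces ∧ s.card = 2 ∧ p ∈ s}

/-! ### Faces of a triangulation -/

section Triangulation

open scoped Classical

variable {A : Finset Plane} {T : SimplicialComplex ℝ Plane}

/-- A point in the relative interior of a face lies only in the faces containing that face. -/
theorem subset_of_pos_weights {s t : Finset Plane} (hs : s ∈ T.faces) (ht : t ∈ T.faces)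
    (w : Plane → ℝ) (hw : ∀ v ∈ s, 0 < w v) (hw1 : ∑ v ∈ s, w v = 1)
    (hx : ∑ v ∈ s, w v • v ∈ convexHull ℝ (t : Set Plane)) : s ⊆ t := by
  classical
  have hxs : ∑ v ∈ s, w v • v ∈ convexHull ℝ (s : Set Plane) :=
    Finset.mem_convexHull'.2 ⟨w, fun v hv => (hw v hv).le, hw1, rfl⟩
  have hst := T.inter_subset_convexHull hs ht ⟨hxs, hx⟩
  rw [← Finset.coe_inter] at hst
  obtain ⟨w', hw'0, hw'1, hw'x⟩ := Finset.mem_convexHull'.1 hst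
  have hind := affineIndependent_iff.1 (T.indep hs) Finset.univ
    (fun v => w v - if (v : Plane) ∈ t then w' v else 0)
  have e1 : ∑ v ∈ s, (if v ∈ t then w' v else 0) = 1 := by
    rw [← Finset.sum_filter, Finset.filter_mem_eq_inter, hw'1]
  have e2 : ∑ v ∈ s, (if v ∈ t then w' v else 0) • v = ∑ v ∈ s, w v • v := by
    simp only [ite_smul, zero_smul]
    rw [← Finset.sum_filter, Finset.filter_mem_eq_inter, hw'x]
  have hz := hind
    (by
      rw [Finset.sum_coe_sort s (fun v => w v - if v ∈ t then w' v else 0),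
        Finset.sum_sub_distrib, e1, hw1, sub_self])
    (by
      rw [Finset.sum_coe_sort s (fun v => (w v - if v ∈ t then w' v else 0) • v)]
      simp only [sub_smul]
      rw [Finset.sum_sub_distrib, e2, sub_self])
  intro v hv
  by_contra hvt
  have := hz ⟨v, hv⟩ (Finset.mem_univ _)
  simp only [hvt, if_false, sub_zero] at this
  exact (hw v hv).ne' this

theorem edge_subset {a b : Plane} (hab : a ≠ b) {t : Finset Plane}
    (hs : ({a, b} : Finset Plane) ∈ T.faces) (ht : t ∈ T.faces) {α β : ℝ} (hα : 0 < α)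
    (hβ : 0 < β) (h1 : α + β = 1) (hx : α • a + β • b ∈ convexHull ℝ (t : Set Plane)) :
    ({a, b} : Finset Plane) ⊆ t := by
  refine subset_of_pos_weights hs ht (fun v => if v = a then α else β) ?_ ?_ ?_
  · intro v _
    split_ifs <;> assumption
  · rw [Finset.sum_pair hab]; simp [hab.symm, h1]
  · rw [Finset.sum_pair hab]; simpa [hab.symm] using hx

theorem triangle_subset {a q b : Plane} (haq : a ≠ q) (hab : a ≠ b) (hqb : q ≠ b)
    {t : Finset Plane} (hs : ({a, q, b} : Finset Plane) ∈ T.faces) (ht : t ∈ T.faces)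
    {α β γ : ℝ} (hα : 0 < α) (hβ : 0 < β) (hγ : 0 < γ) (h1 : α + β + γ = 1)
    (hx : α • a + β • q + γ • b ∈ convexHull ℝ (t : Set Plane)) :
    ({a, q, b} : Finset Plane) ⊆ t := by
  have hsum : ∀ {M : Type} [AddCommMonoid M] (f : Plane → M),
      ∑ v ∈ ({a, q, b} : Finset Plane), f v = f a + f q + f b := by
    intro M _ f
    rw [Finset.sum_insert (by simp [haq, hab]), Finset.sum_pair hqb, add_assoc]
  refine subset_of_pos_weights hs ht
    (fun v => if v = a then α else if v = q then β else γ) ?_ ?_ ?_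
  · intro v _
    split_ifs <;> assumption
  · rw [hsum]; simp [haq.symm, hab.symm, hqb.symm, h1]
  · rw [hsum]; simpa [haq.symm, hab.symm, hqb.symm] using hx

theorem mem_of_mem_face (hT : IsTriangulation A T) {s : Finset Plane} (hs : s ∈ T.faces)
    {p : Plane} (hp : p ∈ s) : p ∈ A := by
  have : p ∈ T.vertices := T.down_closed hs (Finset.singleton_subset_iff.2 hp) (by simp)
  rw [hT.2.2] at this
  exact_mod_cast this

theorem faces_finite (hT : IsTriangulation A T) : T.faces.Finite :=
  (A.powerset.finite_toSet).subset fun _ hs => 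
    Finset.mem_coe.2 (Finset.mem_powerset.2 fun _ hp => mem_of_mem_face hT hs hp)

theorem face_subset_hull (hT : IsTriangulation A T) {s : Finset Plane} (hs : s ∈ T.faces) :
    convexHull ℝ (s : Set Plane) ⊆ convexHull ℝ (A : Set Plane) :=
  hT.2.1 ▸ T.convexHull_subset_space hs

/-- The faces avoiding `p` form a closed set, so the segment from `p` to `z` starts out inside
some face containing `p`. -/
theorem exists_face_towards (hT : IsTriangulation A T) {p z : Plane}
    (hp : p ∈ convexHull ℝ (A : Set Plane)) (hz : z ∈ convexHull ℝ (A : Set Plane)) :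
    ∃ s ∈ T.faces, p ∈ convexHull ℝ (s : Set Plane) ∧
      ∃ t : ℝ, 0 < t ∧ p + t • (z - p) ∈ convexHull ℝ (s : Set Plane) := by
  set C : Set Plane := ⋃ s ∈ {s ∈ T.faces | p ∉ convexHull ℝ (s : Set Plane)},
    convexHull ℝ (s : Set Plane) with hC
  have hCc : IsClosed C :=
    ((faces_finite hT).subset (Set.sep_subset _ _)).isClosed_biUnion fun s _ =>
      (s.finite_toSet.isCompact_convexHull ℝ).isClosed
  have hpC : p ∉ C := by
    simp only [hC, Set.mem_iUnion, not_exists]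
    rintro s ⟨-, h⟩ h'
    exact h h'
  have hcont : Continuous fun t : ℝ => p + t • (z - p) := by fun_prop
  have hev : ∀ᶠ t : ℝ in nhds 0, p + t • (z - p) ∈ Cᶜ :=
    hcont.continuousAt.eventually_mem (hCc.isOpen_compl.mem_nhds (by simpa using hpC))
  obtain ⟨δ, hδ, hball⟩ := Metric.eventually_nhds_iff.1 hev
  have ht0 : 0 < min (δ / 2) 1 := by positivity
  have htC : p + (min (δ / 2) 1) • (z - p) ∈ Cᶜ := by
    apply hball
    rw [Real.dist_eq, sub_zero, abs_of_pos ht0]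
    exact (min_le_left _ _).trans_lt (by linarith)
  have htK : p + (min (δ / 2) 1) • (z - p) ∈ T.space := by
    rw [hT.2.1]
    exact (convex_convexHull ℝ _).add_smul_sub_mem hp hz ⟨ht0.le, min_le_right _ _⟩
  obtain ⟨s, hs, hx⟩ := T.mem_space_iff.1 htK
  refine ⟨s, hs, ?_, _, ht0, hx⟩
  by_contra hps
  exact htC (Set.mem_biUnion (show s ∈ {s ∈ T.faces | _} from ⟨hs, hps⟩) hx)

/-! ### Minimal degrees -/

/-- The edges of `T`, as a finite set. -/
noncomputable def edges (A : Finset Plane) (T : SimplicialComplex ℝ Plane) :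
    Finset (Finset Plane) := {s ∈ A.powerset | s ∈ T.faces ∧ s.card = 2}

theorem mem_edges (hT : IsTriangulation A T) {s : Finset Plane} :
    s ∈ edges A T ↔ s ∈ T.faces ∧ s.card = 2 := by
  simp only [edges, Finset.mem_filter, Finset.mem_powerset, and_iff_right_iff_imp]
  exact fun h p hp => mem_of_mem_face hT h.1 hp

theorem degree_eq (hT : IsTriangulation A T) (p : Plane) :
    degree T p = {s ∈ edges A T | p ∈ s}.card := by
  rw [degree, Nat.card_coe_set_eq, ← Set.ncard_coe_finset]
  congr 1
  ext s
  simp [mem_edges hT, and_assoc]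

theorem sum_degree (hT : IsTriangulation A T) :
    ∑ p ∈ A, degree T p = 2 * (edges A T).card := by
  simp only [degree_eq hT]
  have := Finset.sum_card_bipartiteAbove_eq_sum_card_bipartiteBelow
    (s := A) (t := edges A T) (fun p s => p ∈ s)
  simp only [Finset.bipartiteAbove, Finset.bipartiteBelow] at this
  rw [this, mul_comm, Finset.sum_const_nat]
  intro s hs
  rw [mem_edges hT] at hs
  rw [Finset.filter_mem_eq_inter, Finset.inter_eq_right.2 fun p hp => mem_of_mem_face hT hs.1 hp]
  exact hs.2

/-- A linear functional that is minimal at `p` among the neighbours of `p` is minimal at `p`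
over the whole hull, because the faces at `p` cover the hull near `p`. -/
theorem le_of_le_neighbours (hT : IsTriangulation A T) {p : Plane} (hp : p ∈ A)
    (f : Plane →ₗ[ℝ] ℝ)
    (hf : ∀ q, q ≠ p → ({p, q} : Finset Plane) ∈ T.faces → f p ≤ f q)
    {z : Plane} (hz : z ∈ convexHull ℝ (A : Set Plane)) : f p ≤ f z := by
  obtain ⟨s, hs, hps, t, ht, hts⟩ :=
    exists_face_towards hT (subset_convexHull ℝ _ (Finset.mem_coe.2 hp)) hz
  have hpv : p ∈ T.vertices := by rw [hT.2.2]; exact_mod_cast hp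
  have hp' := (T.vertex_mem_convexHull_iff hpv hs).1 hps
  have hsub : convexHull ℝ (s : Set Plane) ⊆ {x | f p ≤ f x} := by
    refine convexHull_min ?_ (convex_halfSpace_ge f.isLinear _)
    intro q hq
    by_cases hqp : q = p
    · simp [hqp]
    · exact hf q hqp (T.down_closed hs (by
        intro x hx
        rcases Finset.mem_insert.1 hx with rfl | hx
        · exact hp'
        · rw [Finset.mem_singleton.1 hx]; exact hq) (by simp))
  have := hsub hts
  simp only [Set.mem_ofPred_eq, map_add, map_smul, map_sub, smul_eq_mul] at this
  nlinarith

theorem exists_functional (v : Plane) : ∃ f : Plane →ₗ[ℝ] ℝ, f ≠ 0 ∧ f v = 0 := by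
  let x : Plane →ₗ[ℝ] ℝ := (EuclideanSpace.proj (0 : Fin 2) : Plane →L[ℝ] ℝ)
  let y : Plane →ₗ[ℝ] ℝ := (EuclideanSpace.proj (1 : Fin 2) : Plane →L[ℝ] ℝ)
  by_cases h : v 0 = 0
  · refine ⟨x, fun hx => ?_, h⟩
    simpa [x] using LinearMap.congr_fun hx (EuclideanSpace.single 0 1)
  · refine ⟨v 0 • y - v 1 • x, fun hx => h ?_, ?_⟩
    · simpa [x, y] using LinearMap.congr_fun hx (EuclideanSpace.single 1 1)
    · simp [x, y, mul_comm]

theorem not_mem_interior_of_min {K : Set Plane} {p : Plane} {f : Plane →ₗ[ℝ] ℝ} (hf : f ≠ 0)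
    (h : ∀ z ∈ K, f p ≤ f z) : p ∉ interior K := by
  intro hp
  obtain ⟨v, hv⟩ : ∃ v, f v ≠ 0 := by
    by_contra! h0
    exact hf (LinearMap.ext h0)
  have hcont : Continuous fun t : ℝ => p + t • v := by fun_prop
  have hev : ∀ᶠ t : ℝ in nhds 0, p + t • v ∈ interior K :=
    hcont.continuousAt.eventually_mem (isOpen_interior.mem_nhds (by simpa using hp))
  obtain ⟨δ, hδ, hball⟩ := Metric.eventually_nhds_iff.1 hev
  have key : ∀ t : ℝ, |t| < δ → 0 ≤ t * f v := by
    intro t ht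
    have := h _ (interior_subset (hball (by simpa using ht)))
    simpa using this
  have h1 := key (δ / 2) (by rw [abs_of_pos] <;> linarith)
  have h2 := key (-(δ / 2)) (by rw [abs_neg, abs_of_pos] <;> linarith)
  have : f v = 0 := by nlinarith
  exact hv this

/-- The neighbours of `p`. -/
noncomputable def nbrs (A : Finset Plane) (T : SimplicialComplex ℝ Plane) (p : Plane) :
    Finset Plane := {q ∈ A | q ≠ p ∧ ({p, q} : Finset Plane) ∈ T.faces}

theorem mem_nbrs (hT : IsTriangulation A T) {p q : Plane} :
    q ∈ nbrs A T p ↔ q ≠ p ∧ ({p, q} : Finset Plane) ∈ T.faces := by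
  simp only [nbrs, Finset.mem_filter, and_iff_right_iff_imp]
  exact fun h => mem_of_mem_face hT h.2 (by simp)

theorem card_nbrs_le (hT : IsTriangulation A T) (p : Plane) :
    (nbrs A T p).card ≤ degree T p := by
  rw [degree_eq hT]
  refine Finset.card_le_card_of_injOn (fun q => {p, q}) ?_ ?_
  · intro q hq
    have hq := (mem_nbrs hT).1 hq
    simp only [Finset.coe_filter, Set.mem_ofPred_eq, mem_edges hT]
    exact ⟨⟨hq.2, Finset.card_pair hq.1.symm⟩, by simp⟩
  · intro q hq q' hq' h
    have hq := (mem_nbrs hT).1 hq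
    have h : ({p, q} : Finset Plane) = {p, q'} := h
    have : q ∈ ({p, q'} : Finset Plane) := h ▸ (by simp)
    simpa [hq.1] using this

/-- With at most one neighbour `q`, a functional constant along `pq` would be constant on `A`. -/
theorem two_le_degree (hT : IsTriangulation A T) (hdim : affineSpan ℝ (A : Set Plane) = ⊤)
    {p : Plane} (hp : p ∈ A) : 2 ≤ degree T p := by
  refine le_trans ?_ (card_nbrs_le hT p)
  by_contra! hlt
  obtain ⟨q, hq⟩ : ∃ q, nbrs A T p ⊆ {q} := Finset.card_le_one_iff_subset_singleton.1 (by omega)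
  obtain ⟨f, hf0, hf⟩ := exists_functional (q - p)
  have hfq : f q = f p := by simpa [sub_eq_zero] using hf
  have hnb : ∀ x, x ≠ p → ({p, x} : Finset Plane) ∈ T.faces → f x = f p := by
    intro x hx hx'
    rw [Finset.mem_singleton.1 (hq ((mem_nbrs hT).2 ⟨hx, hx'⟩)), hfq]
  have hA : ∀ z ∈ A, f z = f p := by
    intro z hz
    have hz := subset_convexHull ℝ _ (Finset.mem_coe.2 hz)
    apply le_antisymm
    · have := le_of_le_neighbours hT hp (-f) (fun x h1 h2 => by simp [hnb x h1 h2]) hz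
      simpa using this
    · exact le_of_le_neighbours hT hp f (fun x h1 h2 => (hnb x h1 h2).ge) hz
  apply hf0
  have : Set.EqOn f.toAffineMap (AffineMap.const ℝ Plane (f p)) (A : Set Plane) :=
    fun z hz => hA z hz
  have hall : ∀ z, f z = f p := by
    intro z
    have hz : z ∈ affineSpan ℝ (A : Set Plane) := hdim ▸ AffineSubspace.mem_top ℝ _ _
    exact (AffineMap.eqOn_affineSpan this) hz
  have h0 : f p = 0 := by simpa using (hall 0).symm
  ext z
  simp [hall z, h0]

/-- With at most two neighbours, some nonzero functional is minimal at `p` among them. -/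
theorem three_le_degree (hT : IsTriangulation A T) {p : Plane} (hp : p ∈ A)
    (hint : p ∈ interior (convexHull ℝ (A : Set Plane))) : 3 ≤ degree T p := by
  refine le_trans ?_ (card_nbrs_le hT p)
  by_contra! hlt
  obtain ⟨q, q', hq⟩ : ∃ q q', nbrs A T p ⊆ {q, q'} := by
    rcases (nbrs A T p).eq_empty_or_nonempty with h | ⟨q, hq⟩
    · exact ⟨p, p, by simp [h]⟩
    · have : ((nbrs A T p).erase q).card ≤ 1 := by
        rw [Finset.card_erase_of_mem hq]; omega
      obtain ⟨q', hq'⟩ := Finset.card_le_one_iff_subset_singleton.1 this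
      exact ⟨q, q', Finset.subset_insert_iff.2 hq'⟩
  obtain ⟨f, hf0, hf, hf'⟩ : ∃ f : Plane →ₗ[ℝ] ℝ, f ≠ 0 ∧ f p ≤ f q ∧ f p ≤ f q' := by
    obtain ⟨f, hf0, hf⟩ := exists_functional (q - p)
    have hfq : f q = f p := by simpa [sub_eq_zero] using hf
    rcases le_total (f p) (f q') with h | h
    · exact ⟨f, hf0, hfq.ge, h⟩
    · exact ⟨-f, neg_ne_zero.2 hf0, by simp [hfq], by simpa using h⟩
  refine not_mem_interior_of_min hf0 (fun z hz => le_of_le_neighbours hT hp f ?_ hz) hint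
  intro x h1 h2
  have := hq ((mem_nbrs hT).2 ⟨h1, h2⟩)
  simp only [Finset.mem_insert, Finset.mem_singleton] at this
  rcases this with rfl | rfl <;> assumption

/-! ### Horizontal sweep in a generic direction -/

/-- Linear coordinates `X`, `Y` on the plane with dual basis `u`, `w`. The vector `u` is thought
of as pointing right and `w` as pointing up. -/
structure Frame where
  X : Plane →ₗ[ℝ] ℝ
  Y : Plane →ₗ[ℝ] ℝ
  u : Plane
  w : Plane
  X_u : X u = 1
  Y_u : Y u = 0
  X_w : X w = 0
  Y_w : Y w = 1
  ext : ∀ v₁ v₂, X v₁ = X v₂ → Y v₁ = Y v₂ → v₁ = v₂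

/-- The mirror image of a frame, exchanging left and right. -/
def Frame.reflect (F : Frame) : Frame where
  X := -F.X
  Y := F.Y
  u := -F.u
  w := F.w
  X_u := by simp [F.X_u]
  Y_u := by simp [F.Y_u]
  X_w := by simp [F.X_w]
  Y_w := F.Y_w
  ext v v' h k := F.ext v v' (by simpa using h) k

/-- A shear by all but finitely many slopes puts the points of `A` at distinct heights. -/
theorem exists_frame (A : Finset Plane) : ∃ F : Frame, Set.InjOn F.Y (A : Set Plane) := by
  obtain ⟨c, hc⟩ := ((A ×ˢ A).image fun pq : Plane × Plane =>
    (pq.1 1 - pq.2 1) / (pq.2 0 - pq.1 0)).finite_toSet.infinite_compl.nonempty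
  let x : Plane →ₗ[ℝ] ℝ := (EuclideanSpace.proj (0 : Fin 2) : Plane →L[ℝ] ℝ)
  let y : Plane →ₗ[ℝ] ℝ := (EuclideanSpace.proj (1 : Fin 2) : Plane →L[ℝ] ℝ)
  have hx : ∀ v, x v = v 0 := fun _ => rfl
  have hy : ∀ v, y v = v 1 := fun _ => rfl
  have hext : ∀ v v', x v = x v' → (y + c • x) v = (y + c • x) v' → v = v' := by
    intro v v' h h'
    simp only [LinearMap.add_apply, LinearMap.smul_apply, hx, hy, smul_eq_mul] at h h'
    rw [h] at h'
    ext i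
    fin_cases i
    · exact h
    · simpa using h'
  refine ⟨⟨x, y + c • x, EuclideanSpace.single 0 1 - c • EuclideanSpace.single 1 1,
    EuclideanSpace.single 1 1, ?_, ?_, ?_, ?_, hext⟩, ?_⟩
  · simp [hx]
  · simp [hx, hy]
  · simp [hx]
  · simp [hx, hy]
  · intro p hp q hq h
    by_cases h0 : p 0 = q 0
    · exact hext p q h0 h
    · exfalso
      apply hc
      simp only [Finset.coe_image, Set.mem_image]
      refine ⟨(p, q), by simpa using ⟨hp, hq⟩, ?_⟩
      simp only [LinearMap.add_apply, LinearMap.smul_apply, hx, hy, smul_eq_mul] at h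
      have : q 0 - p 0 ≠ 0 := sub_ne_zero.2 (Ne.symm h0)
      rw [div_eq_iff this]
      linarith

/-- `a`, `q`, `b` are the lowest, middle and highest vertex of a triangle of `T`, and the long
edge `ab` passes to the left of `q`. The mirrored situation, with `ab` to the right of `q`, is
`LeftMid T F.reflect a q b`. -/
structure LeftMid (T : SimplicialComplex ℝ Plane) (F : Frame) (a q b : Plane) : Prop where
  face : ({a, q, b} : Finset Plane) ∈ T.faces
  lo : F.Y a < F.Y q
  hi : F.Y q < F.Y b
  side : (F.X b - F.X a) * (F.Y q - F.Y a) < (F.X q - F.X a) * (F.Y b - F.Y a)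

variable {F : Frame}

/-- The horizontal ray going left from the middle vertex meets the interior of the long edge. -/
theorem LeftMid.exists_chord {a q b : Plane} (h : LeftMid T F a q b) :
    ∃ δ : ℝ, 0 < δ ∧ ∃ τ : ℝ, 0 < τ ∧ τ < 1 ∧ q - δ • F.u = (1 - τ) • a + τ • b := by
  have h1 := h.lo
  have h2 := h.hi
  have h3 := h.side
  have hD : 0 < F.Y b - F.Y a := by linarith
  set τ := (F.Y q - F.Y a) / (F.Y b - F.Y a) with hτ
  have hτm : τ * (F.Y b - F.Y a) = F.Y q - F.Y a := div_mul_cancel₀ _ hD.ne'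
  refine ⟨F.X q - (F.X a + τ * (F.X b - F.X a)), ?_, τ, div_pos (by linarith) hD,
    (div_lt_one hD).2 (by linarith), F.ext _ _ ?_ ?_⟩
  · have : 0 < (F.X q - (F.X a + τ * (F.X b - F.X a))) * (F.Y b - F.Y a) := by
      have : (F.X q - (F.X a + τ * (F.X b - F.X a))) * (F.Y b - F.Y a) =
        (F.X q - F.X a) * (F.Y b - F.Y a) - (F.X b - F.X a) * (τ * (F.Y b - F.Y a)) := by ring
      rw [this, hτm]
      linarith
    exact pos_of_mul_pos_left this hD.le
  · simp [F.X_u]; ring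
  · simp [F.Y_u]; linarith

theorem LeftMid.mem_left (hT : IsTriangulation A T) {a q b : Plane} (h : LeftMid T F a q b) :
    ∃ δ : ℝ, 0 < δ ∧ q - δ • F.u ∈ convexHull ℝ (A : Set Plane) := by
  obtain ⟨δ, hδ, τ, h0, h1, he⟩ := h.exists_chord
  refine ⟨δ, hδ, he ▸ convex_convexHull ℝ _ ?_ ?_ (by linarith) h0.le (by ring)⟩
  · exact subset_convexHull ℝ _ (mem_of_mem_face hT h.face (by simp))
  · exact subset_convexHull ℝ _ (mem_of_mem_face hT h.face (by simp))

theorem LeftMid.subset {a q b a' b' : Plane} (h : LeftMid T F a q b)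
    (h' : LeftMid T F a' q b') : ({a, q, b} : Finset Plane) ⊆ {a', q, b'} := by
  obtain ⟨δ, hδ, τ, h0, h1, he⟩ := h.exists_chord
  obtain ⟨δ', hδ', τ', h0', h1', he'⟩ := h'.exists_chord
  have hne : ∀ {x y : Plane}, F.Y x < F.Y y → x ≠ y := fun hxy e => (e ▸ hxy).ne rfl
  -- the point at distance `ε` to the left of `q` lies inside both triangles
  set ε := min δ δ' / 2 with hε
  have hm : 0 < min δ δ' := lt_min hδ hδ'
  have hε0 : 0 < ε := by positivity
  have hεδ : ε < δ := by have := min_le_left δ δ'; linarith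
  have hεδ' : ε < δ' := by have := min_le_right δ δ'; linarith
  have hs : 0 < ε / δ := by positivity
  have hs1 : ε / δ < 1 := (div_lt_one hδ).2 hεδ
  have hpt : ∀ d : ℝ, 0 < d → q - ε • F.u = (1 - ε / d) • q + (ε / d) • (q - d • F.u) := by
    intro d hd
    rw [smul_sub, smul_smul, div_mul_cancel₀ _ hd.ne']
    module
  refine triangle_subset (hne h.lo) (hne (h.lo.trans h.hi)) (hne h.hi) h.face h'.face
    (α := ε / δ * (1 - τ)) (β := 1 - ε / δ) (γ := ε / δ * τ)
    (mul_pos hs (by linarith)) (by linarith) (mul_pos hs h0) (by ring) ?_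
  have e1 : (ε / δ * (1 - τ)) • a + (1 - ε / δ) • q + (ε / δ * τ) • b = q - ε • F.u := by
    rw [hpt δ hδ, he]; module
  rw [e1, hpt δ' hδ', he']
  have hK := convex_convexHull ℝ ((({a', q, b'} : Finset Plane)) : Set Plane)
  have hmem : ∀ x ∈ ({a', q, b'} : Finset Plane),
      x ∈ convexHull ℝ ((({a', q, b'} : Finset Plane)) : Set Plane) :=
    fun x hx => subset_convexHull ℝ _ (Finset.mem_coe.2 hx)
  refine hK (hmem q (by simp)) (hK (hmem a' (by simp)) (hmem b' (by simp)) ?_ h0'.le ?_) ?_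
    (by positivity) (by ring)
  · linarith
  · ring
  · have := (div_lt_one hδ').2 hεδ'
    linarith

/-- At most one triangle lies immediately to the left of its middle vertex `q`, since two of them
would have a common interior point close to `q`. -/
theorem LeftMid.unique {a q b a' b' : Plane} (h : LeftMid T F a q b)
    (h' : LeftMid T F a' q b') : a = a' ∧ b = b' := by
  have hs := h.subset h'
  have h1 := h.lo
  have h2 := h.hi
  have h1' := h'.lo
  have h2' := h'.hi
  constructor
  · have := hs (show a ∈ ({a, q, b} : Finset Plane) by simp)
    simp only [Finset.mem_insert, Finset.mem_singleton] at this
    rcases this with e | e | e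
    · exact e
    · rw [e] at h1; linarith
    · rw [e] at h1; linarith
  · have := hs (show b ∈ ({a, q, b} : Finset Plane) by simp)
    simp only [Finset.mem_insert, Finset.mem_singleton] at this
    rcases this with e | e | e
    · rw [e] at h2; linarith
    · rw [e] at h2; linarith
    · exact e

/-- Some point in the relative interior of the segment `ab` can be moved to the left within the
hull of `A`; for a non-horizontal segment this means that it is not on the left boundary. -/
def LeftOpen (A : Finset Plane) (F : Frame) (a b : Plane) : Prop :=
  ∃ t : ℝ, 0 < t ∧ t < 1 ∧ ∃ ε : ℝ, 0 < ε ∧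
    (1 - t) • a + t • b - ε • F.u ∈ convexHull ℝ (A : Set Plane)

/-- An edge `ab` off the left boundary has a triangle `abq` along its left side. The three cases
are `q` above, below, and between the endpoints of the edge. -/
theorem edge_cases (hT : IsTriangulation A T) (hinj : Set.InjOn F.Y (A : Set Plane))
    {a b : Plane} (hab : ({a, b} : Finset Plane) ∈ T.faces) (hY : F.Y a < F.Y b)
    (hopen : LeftOpen A F a b) :
    ∃ q, LeftMid T F a b q ∨ LeftMid T F q a b ∨ LeftMid T F.reflect a q b := by
  obtain ⟨t, ht0, ht1, ε, hε, hz'⟩ := hopen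
  have hne : a ≠ b := fun e => (e ▸ hY).ne rfl
  have ha := mem_of_mem_face hT hab (p := a) (by simp)
  have hb := mem_of_mem_face hT hab (p := b) (by simp)
  have hz : (1 - t) • a + t • b ∈ convexHull ℝ (A : Set Plane) :=
    convex_convexHull ℝ _ (subset_convexHull ℝ _ ha) (subset_convexHull ℝ _ hb)
      (by linarith) ht0.le (by ring)
  obtain ⟨s, hs, hzs, r, hr, hrs⟩ := exists_face_towards hT hz hz'
  have hsub := edge_subset hne hab hs (by linarith) ht0 (by ring) hzs
  have has : a ∈ s := hsub (by simp)
  have hbs : b ∈ s := hsub (by simp)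
  -- `g` measures the signed distance to the left of the line `ab`
  let g : Plane →ₗ[ℝ] ℝ := (F.X b - F.X a) • F.Y - (F.Y b - F.Y a) • F.X
  have hg : ∀ v, g v = (F.X b - F.X a) * F.Y v - (F.Y b - F.Y a) * F.X v := fun _ => rfl
  have hgab : g b = g a := by simp only [hg]; ring
  obtain ⟨q, hqs, hgq⟩ : ∃ q ∈ s, g a < g q := by
    by_contra! hcon
    have hsub : convexHull ℝ (s : Set Plane) ⊆ {x | g x ≤ g a} :=
      convexHull_min (fun q hq => hcon q hq) (convex_halfSpace_le g.isLinear _)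
    have := hsub hrs
    have hgu : g F.u = -(F.Y b - F.Y a) := by simp [hg, F.X_u, F.Y_u]
    simp only [Set.mem_ofPred_eq, map_add, map_smul, map_sub, smul_eq_mul, hgab, hgu] at this
    have : r * (ε * (F.Y b - F.Y a)) ≤ 0 := by linarith
    have : 0 < r * (ε * (F.Y b - F.Y a)) := mul_pos hr (mul_pos hε (by linarith))
    linarith
  have hqa : q ≠ a := by rintro rfl; exact hgq.ne rfl
  have hqb : q ≠ b := by rintro rfl; exact hgq.ne hgab.symm
  have hqA := mem_of_mem_face hT hs hqs
  have hYa : F.Y q ≠ F.Y a := fun e => hqa (hinj hqA ha e)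
  have hYb : F.Y q ≠ F.Y b := fun e => hqb (hinj hqA hb e)
  have hface : ∀ S : Finset Plane, S ⊆ s → S.Nonempty → S ∈ T.faces :=
    fun S hS hS' => T.down_closed hs hS hS'
  have hgq' : (F.X b - F.X a) * F.Y a - (F.Y b - F.Y a) * F.X a <
      (F.X b - F.X a) * F.Y q - (F.Y b - F.Y a) * F.X q := hgq
  refine ⟨q, ?_⟩
  rcases lt_or_gt_of_ne hYa with h | h
  · right; left
    refine ⟨hface _ ?_ (by simp), h, hY, by linarith⟩
    simp [Finset.insert_subset_iff, hqs, has, hbs]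
  rcases lt_or_gt_of_ne hYb with h' | h'
  · right; right
    refine ⟨hface _ ?_ (by simp), h, h', ?_⟩
    · simp [Finset.insert_subset_iff, hqs, has, hbs]
    · simp only [Frame.reflect, LinearMap.neg_apply]; linarith
  · left
    refine ⟨hface _ ?_ (by simp), hY, h', by linarith⟩
    simp [Finset.insert_subset_iff, hqs, has, hbs]

/-- Two left boundary edges with the same upper endpoint coincide: at a common level just below
`b` both pass through the leftmost point of the hull. -/
theorem closed_edge_unique_aux (hT : IsTriangulation A T) {a a' b : Plane}
    (hab : ({a, b} : Finset Plane) ∈ T.faces) (hY : F.Y a < F.Y b)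
    (hab' : ({a', b} : Finset Plane) ∈ T.faces) (hY' : F.Y a' < F.Y b)
    (hn : ¬ LeftOpen A F a b) (hn' : ¬ LeftOpen A F a' b) :
    ({a, b} : Finset Plane) ⊆ {a', b} := by
  have hA : ∀ {x}, ({x, b} : Finset Plane) ∈ T.faces → ∀ t : ℝ, 0 < t → t < 1 →
      (1 - t) • x + t • b ∈ convexHull ℝ (A : Set Plane) := fun hx t h0 h1 =>
    convex_convexHull ℝ _ (subset_convexHull ℝ _ (mem_of_mem_face hT hx (by simp)))
      (subset_convexHull ℝ _ (mem_of_mem_face hT hx (by simp))) (by linarith) h0.le (by ring)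
  -- points `z`, `z'` of the two edges on a common level `Y b - η`
  obtain ⟨η, hη, h1, h2⟩ : ∃ η, 0 < η ∧ η < F.Y b - F.Y a ∧ η < F.Y b - F.Y a' := by
    refine ⟨min (F.Y b - F.Y a) (F.Y b - F.Y a') / 2, ?_, ?_, ?_⟩
    all_goals
      have := lt_min (sub_pos.2 hY) (sub_pos.2 hY')
      have := min_le_left (F.Y b - F.Y a) (F.Y b - F.Y a')
      have := min_le_right (F.Y b - F.Y a) (F.Y b - F.Y a')
      linarith
  have hlev : ∀ {x}, η < F.Y b - F.Y x → ∃ t : ℝ, 0 < t ∧ t < 1 ∧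
      F.Y ((1 - t) • x + t • b) = F.Y b - η := by
    intro x hx
    have hpos : 0 < F.Y b - F.Y x := hη.trans hx
    refine ⟨1 - η / (F.Y b - F.Y x), ?_, ?_, ?_⟩
    · have := (div_lt_one hpos).2 hx; linarith
    · have : 0 < η / (F.Y b - F.Y x) := by positivity
      linarith
    · have := div_mul_cancel₀ η hpos.ne'
      simp only [map_add, map_smul, smul_eq_mul]
      linarith
  obtain ⟨t, ht0, ht1, hz⟩ := hlev h1
  obtain ⟨t', ht0', ht1', hz'⟩ := hlev h2
  set z := (1 - t) • a + t • b with hzdef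
  set z' := (1 - t') • a' + t' • b with hzdefb
  -- moving left by the difference of abscissas joins points at the same level
  have hsub : ∀ v v' : Plane, F.Y v = F.Y v' → v - (F.X v - F.X v') • F.u = v' := by
    intro v v' h
    apply F.ext <;> simp [F.X_u, F.Y_u, h]
  rcases lt_trichotomy (F.X z) (F.X z') with h | h | h
  · refine (hn' ⟨t', ht0', ht1', _, sub_pos.2 h, ?_⟩).elim
    rw [← hzdefb, hsub z' z (hz'.trans hz.symm)]
    exact hA hab t ht0 ht1
  · have hzz : z = z' := F.ext _ _ h (hz.trans hz'.symm)
    refine edge_subset (fun e => (e ▸ hY).ne rfl) hab hab' (sub_pos.2 ht1) ht0 (by ring) ?_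
    rw [← hzdef, hzz, hzdefb]
    exact convex_convexHull ℝ _ (subset_convexHull ℝ _ (by simp))
      (subset_convexHull ℝ _ (by simp)) (by linarith) ht0'.le (by ring)
  · refine (hn ⟨t, ht0, ht1, _, sub_pos.2 h, ?_⟩).elim
    rw [← hzdef, hsub z z' (hz.trans hz'.symm)]
    exact (hA hab' t' ht0' ht1' :)

/-- If an endpoint of an edge can be moved to the left within the hull, so can the midpoint. -/
theorem leftOpen_of_leftMid (hT : IsTriangulation A T) {a b c d : Plane}
    (hab : ({a, b} : Finset Plane) ∈ T.faces) (h : LeftMid T F c b d) : LeftOpen A F a b := by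
  obtain ⟨δ, hδ, hm⟩ := h.mem_left hT
  refine ⟨1 / 2, by norm_num, by norm_num, δ / 2, by positivity, ?_⟩
  have ha := subset_convexHull ℝ (A : Set Plane)
    (Finset.mem_coe.2 (mem_of_mem_face hT hab (p := a) (by simp)))
  convert! convex_convexHull ℝ _ ha hm (a := 1 / 2) (b := 1 / 2) (by norm_num) (by norm_num)
    (by norm_num) using 1
  module

theorem interior_nonempty (hdim : affineSpan ℝ (A : Set Plane) = ⊤) :
    (interior (convexHull ℝ (A : Set Plane))).Nonempty :=
  interior_convexHull_nonempty_iff_affineSpan_eq_top.2 hdim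

/-- A supporting line at `q` would be horizontal, as it has points of the hull on both sides of
`q` at the same height, but there are points of the hull strictly above and below `q`. -/
theorem mem_interior_of_left_right (hT : IsTriangulation A T)
    (hdim : affineSpan ℝ (A : Set Plane) = ⊤) {a q b a' b' : Plane}
    (h : LeftMid T F a q b) (h' : LeftMid T F.reflect a' q b') :
    q ∈ interior (convexHull ℝ (A : Set Plane)) := by
  by_contra hq
  have hconv := convex_convexHull ℝ (A : Set Plane)
  obtain ⟨f, hf⟩ := geometric_hahn_banach_point_open hconv.interior isOpen_interior hq
  have hle : ∀ z ∈ convexHull ℝ (A : Set Plane), f q ≤ f z := by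
    intro z hz
    have hz : z ∈ closure (interior (convexHull ℝ (A : Set Plane))) := by
      rw [hconv.closure_interior_eq_closure_of_nonempty_interior (interior_nonempty hdim)]
      exact subset_closure hz
    exact closure_minimal (fun x hx => (hf x hx).le)
      (isClosed_le continuous_const f.continuous) hz
  have hA : ∀ z ∈ A, f q ≤ f z := fun z hz => hle z (subset_convexHull ℝ _ hz)
  obtain ⟨δ, hδ, hm⟩ := h.mem_left hT
  obtain ⟨δ', hδ', hm'⟩ := h'.mem_left hT
  have e1 := hle _ hm
  have e2 := hle _ hm'
  simp only [Frame.reflect, map_sub, map_smul, smul_eq_mul, map_neg] at e1 e2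
  have hu : f F.u = 0 := by
    apply le_antisymm <;> nlinarith
  have hfY : ∀ v, f v = F.Y v * f F.w := by
    intro v
    have : v = F.X v • F.u + F.Y v • F.w := by
      apply F.ext <;> simp [F.X_u, F.Y_u, F.X_w, F.Y_w]
    conv_lhs => rw [this]
    simp [hu]
  have ea := hA a (mem_of_mem_face hT h.face (by simp))
  have eb := hA b (mem_of_mem_face hT h.face (by simp))
  have hlo := h.lo
  have hhi := h.hi
  rw [hfY q, hfY a] at ea
  rw [hfY q, hfY b] at eb
  have hw : f F.w = 0 := by
    apply le_antisymm <;> nlinarith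
  obtain ⟨x, hx⟩ := interior_nonempty hdim
  have := hf x hx
  rw [hfY q, hfY x, hw] at this
  simp at this

/-! ### Counting -/

/-- The vertices that are the middle vertex of a triangle lying locally to their left. -/
noncomputable def leftMids (A : Finset Plane) (T : SimplicialComplex ℝ Plane) (F : Frame) :
    Finset Plane := {q ∈ A | ∃ a b, LeftMid T F a q b}

theorem LeftMid.mem_leftMids (hT : IsTriangulation A T) {a q b : Plane}
    (h : LeftMid T F a q b) : q ∈ leftMids A T F :=
  Finset.mem_filter.2 ⟨mem_of_mem_face hT h.face (by simp), a, b, h⟩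

/-- Every edge is charged to a vertex. If a triangle lies along the left side of the edge, the
charge goes to the middle vertex of that triangle; a triangle to the left of its middle vertex is
charged by its two short edges, and one to the right by its long edge only. An edge on the left
boundary of the hull is charged to its upper endpoint, which is not the lowest vertex `m`. -/
theorem card_edges_le (hT : IsTriangulation A T) (hinj : Set.InjOn F.Y (A : Set Plane))
    {m : Plane} (hm : ∀ p ∈ A, F.Y m ≤ F.Y p) :
    (edges A T).card ≤ 2 * (leftMids A T F).card + (leftMids A T F.reflect).card +
      {p ∈ A | p ∉ leftMids A T F ∧ p ≠ m}.card := by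
  -- `R1`, `R2`: lower and upper short edge; `R3`: long edge; `R4`: left boundary edge
  set R1 : Finset Plane → Plane → Prop := fun e p => ∃ a q, e = {a, p} ∧ LeftMid T F a p q
  set R2 : Finset Plane → Plane → Prop := fun e p => ∃ b q, e = {p, b} ∧ LeftMid T F q p b
  set R3 : Finset Plane → Plane → Prop :=
    fun e p => ∃ a b, e = {a, b} ∧ LeftMid T F.reflect a p b
  set R4 : Finset Plane → Plane → Prop :=
    fun e p => ∃ a, e = {a, p} ∧ e ∈ T.faces ∧ F.Y a < F.Y p ∧ ¬ LeftOpen A F a p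
  set E1 := {e ∈ edges A T | ∃ p ∈ leftMids A T F, R1 e p}
  set E2 := {e ∈ edges A T | ∃ p ∈ leftMids A T F, R2 e p}
  set E3 := {e ∈ edges A T | ∃ p ∈ leftMids A T F.reflect, R3 e p}
  set E4 := {e ∈ edges A T | ∃ p ∈ ({p ∈ A | p ∉ leftMids A T F ∧ p ≠ m} : Finset Plane), R4 e p}
  have hcover : edges A T ⊆ E1 ∪ E2 ∪ E3 ∪ E4 := by
    intro e he
    obtain ⟨hef, hec⟩ := (mem_edges hT).1 he
    obtain ⟨a, b, rfl, hY⟩ : ∃ a b, e = {a, b} ∧ F.Y a < F.Y b := by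
      obtain ⟨a, b, hab, rfl⟩ := Finset.card_eq_two.1 hec
      have hYne : F.Y a ≠ F.Y b := fun h => hab
        (hinj (mem_of_mem_face hT hef (by simp)) (mem_of_mem_face hT hef (by simp)) h)
      rcases lt_or_gt_of_ne hYne with h | h
      · exact ⟨a, b, rfl, h⟩
      · exact ⟨b, a, Finset.pair_comm a b, h⟩
    simp only [Finset.mem_union, E1, E2, E3, E4, Finset.mem_filter, he, true_and]
    by_cases hopen : LeftOpen A F a b
    · obtain ⟨q, h | h | h⟩ := edge_cases hT hinj hef hY hopen
      · exact Or.inl (Or.inl (Or.inl ⟨b, h.mem_leftMids hT, a, q, rfl, h⟩))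
      · exact Or.inl (Or.inl (Or.inr ⟨a, h.mem_leftMids hT, b, q, rfl, h⟩))
      · exact Or.inl (Or.inr ⟨q, h.mem_leftMids hT, a, b, rfl, h⟩)
    · refine Or.inr ⟨b, ⟨mem_of_mem_face hT hef (by simp), ?_, ?_⟩, a, rfl, hef, hY, hopen⟩
      · intro hb
        obtain ⟨c, d, h⟩ := (Finset.mem_filter.1 hb).2
        exact hopen (leftOpen_of_leftMid hT hef h)
      · rintro rfl
        exact (hm a (mem_of_mem_face hT hef (by simp))).not_gt hY
  have h1 : E1.card ≤ (leftMids A T F).card := by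
    refine Finset.card_le_card_of_forall_subsingleton R1 (fun e he => (Finset.mem_filter.1 he).2) ?_
    rintro p - e ⟨-, a, q, rfl, h⟩ e' ⟨-, a', q', rfl, h'⟩
    rw [(h.unique h').1]
  have h2 : E2.card ≤ (leftMids A T F).card := by
    refine Finset.card_le_card_of_forall_subsingleton R2 (fun e he => (Finset.mem_filter.1 he).2) ?_
    rintro p - e ⟨-, a, q, rfl, h⟩ e' ⟨-, a', q', rfl, h'⟩
    rw [(h.unique h').2]
  have h3 : E3.card ≤ (leftMids A T F.reflect).card := by
    refine Finset.card_le_card_of_forall_subsingleton R3 (fun e he => (Finset.mem_filter.1 he).2) ?_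
    rintro p - e ⟨-, a, q, rfl, h⟩ e' ⟨-, a', q', rfl, h'⟩
    rw [(h.unique h').1, (h.unique h').2]
  have h4 : E4.card ≤ {p ∈ A | p ∉ leftMids A T F ∧ p ≠ m}.card := by
    refine Finset.card_le_card_of_forall_subsingleton R4 (fun e he => (Finset.mem_filter.1 he).2) ?_
    rintro p - e ⟨-, a, rfl, hf, hY, h⟩ e' ⟨-, a', rfl, hf', hY', h'⟩
    exact (closed_edge_unique_aux hT hf hY hf' hY' h h').antisymm
      (closed_edge_unique_aux hT hf' hY' hf hY h' h)
  have := Finset.card_le_card hcover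
  have := Finset.card_union_le (E1 ∪ E2 ∪ E3) E4
  have := Finset.card_union_le (E1 ∪ E2) E3
  have := Finset.card_union_le E1 E2
  omega

/-- The bound `E ≤ 3 n - h - 3`, where `h` is the number of boundary vertices. Interior vertices
receive at most three charges, boundary vertices at most two, and the lowest and highest vertex
at most zero and one. -/
theorem edges_bound (hT : IsTriangulation A T) (hdim : affineSpan ℝ (A : Set Plane) = ⊤) :
    (edges A T).card + 3 ≤
      ∑ p ∈ A, if p ∈ interior (convexHull ℝ (A : Set Plane)) then 3 else 2 := by
  obtain ⟨F, hinj⟩ := exists_frame A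
  have hne : A.Nonempty := by
    rw [← Finset.coe_nonempty, ← affineSpan_nonempty ℝ, hdim]
    exact ⟨0, trivial⟩
  obtain ⟨m, hmA, hm⟩ := A.exists_min_image F.Y hne
  obtain ⟨M, hMA, hM⟩ := A.exists_max_image F.Y hne
  have hY0 : F.Y ≠ 0 := fun h => by simpa [h] using F.Y_w
  have hmint : m ∉ interior (convexHull ℝ (A : Set Plane)) :=
    not_mem_interior_of_min hY0 fun z hz =>
      convexHull_min (fun q hq => hm q hq) (convex_halfSpace_ge F.Y.isLinear _) hz
  have hMint : M ∉ interior (convexHull ℝ (A : Set Plane)) :=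
    not_mem_interior_of_min (neg_ne_zero.2 hY0) fun z hz => by
      have : z ∈ {z | F.Y z ≤ F.Y M} :=
        convexHull_min (fun q hq => hM q hq) (convex_halfSpace_le F.Y.isLinear _) hz
      simpa using this
  have hmM : m ≠ M := by
    rintro rfl
    have hA : A ⊆ {m} := fun p hp => Finset.mem_singleton.2
      (hinj hp hmA (le_antisymm (hM p hp) (hm p hp)))
    have hsub : convexHull ℝ (A : Set Plane) ⊆ {m} :=
      convexHull_min (by simpa using Finset.coe_subset.2 hA) (convex_singleton m)
    obtain ⟨x, hx⟩ := interior_nonempty hdim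
    have := hsub (interior_subset hx)
    rw [Set.mem_singleton_iff] at this
    exact hmint (this ▸ hx)
  have hcard := card_edges_le hT hinj hm
  have hnot : ∀ G : Frame, G.Y = F.Y → m ∉ leftMids A T G ∧ M ∉ leftMids A T G := by
    intro G hG
    constructor
    · intro h
      obtain ⟨a, b, h⟩ := (Finset.mem_filter.1 h).2
      have := h.lo
      rw [hG] at this
      exact (hm a (mem_of_mem_face hT h.face (by simp))).not_gt this
    · intro h
      obtain ⟨a, b, h⟩ := (Finset.mem_filter.1 h).2
      have := h.hi
      rw [hG] at this
      exact (hM b (mem_of_mem_face hT h.face (by simp))).not_gt this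
  obtain ⟨hm1, hM1⟩ := hnot F rfl
  obtain ⟨hm2, hM2⟩ := hnot F.reflect rfl
  have hsum : 2 * (leftMids A T F).card + (leftMids A T F.reflect).card +
      {p ∈ A | p ∉ leftMids A T F ∧ p ≠ m}.card =
      ∑ p ∈ A, ((2 * if p ∈ leftMids A T F then 1 else 0) +
        (if p ∈ leftMids A T F.reflect then 1 else 0) +
        if p ∉ leftMids A T F ∧ p ≠ m then 1 else 0) := by
    have hsubF : ∀ G, A ∩ leftMids A T G = leftMids A T G :=
      fun G => Finset.inter_eq_right.2 (Finset.filter_subset _ _)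
    rw [Finset.sum_add_distrib, Finset.sum_add_distrib, ← Finset.mul_sum]
    simp only [← Finset.card_filter, Finset.filter_mem_eq_inter, hsubF]
  -- the charges missing at the lowest vertex `m` and the highest vertex `M`
  have h3 : ∑ p ∈ A, ((if p = m then 2 else 0) + if p = M then 1 else 0) = 3 := by
    rw [Finset.sum_add_distrib, Finset.sum_ite_eq' A m, Finset.sum_ite_eq' A M]
    simp [hmA, hMA]
  calc (edges A T).card + 3 ≤ _ := Nat.add_le_add_right (hcard.trans_eq hsum) 3
    _ = ∑ p ∈ A, (((2 * if p ∈ leftMids A T F then 1 else 0) +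
        (if p ∈ leftMids A T F.reflect then 1 else 0) +
        if p ∉ leftMids A T F ∧ p ≠ m then 1 else 0) +
        ((if p = m then 2 else 0) + if p = M then 1 else 0)) := by
      rw [← h3, ← Finset.sum_add_distrib]
    _ ≤ _ := by
      refine Finset.sum_le_sum fun p hp => ?_
      by_cases hpm : p = m
      · subst hpm; simp [hm1, hm2, hmM, hmint]
      by_cases hpM : p = M
      · subst hpM; simp [hM1, hM2, hpm, hMint]
      by_cases hL : p ∈ leftMids A T F <;> by_cases hR : p ∈ leftMids A T F.reflect
      · obtain ⟨a, b, h⟩ := (Finset.mem_filter.1 hL).2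
        obtain ⟨a', b', h'⟩ := (Finset.mem_filter.1 hR).2
        simp [hL, hR, hpm, hpM, mem_interior_of_left_right hT hdim h h']
      all_goals
        simp only [hL, hR, hpm, hpM, if_true, if_false, not_true_eq_false, not_false_eq_true,
          ne_eq, false_and, and_self]
        split_ifs <;> omega

end Triangulation

theorem low_degree_vertices_bound_cardinality
    (A : Finset Plane)
    (hdim : affineSpan ℝ (A : Set Plane) = ⊤)
    (T : SimplicialComplex ℝ Plane)
    (hT : IsTriangulation A T)
    (vdeg bdeg : ℕ → ℕ)
    (hvdeg : ∀ i, vdeg i = Set.ncard {p : Plane | p ∈ A ∧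
      p ∈ interior (convexHull ℝ (A : Set Plane)) ∧ degree T p = i})
    (hbdeg : ∀ j, bdeg j = Set.ncard {p : Plane | p ∈ A ∧
      p ∈ frontier (convexHull ℝ (A : Set Plane)) ∧ degree T p = j}) :
    A.card + 6 ≤
      4 * vdeg 3 + 3 * vdeg 4 + 2 * vdeg 5 + vdeg 6 + 3 * bdeg 2 + 2 * bdeg 3 + bdeg 4 := by
  classical
  set K := convexHull ℝ (A : Set Plane) with hK
  have hfr : ∀ p ∈ A, (p ∈ frontier K ↔ p ∉ interior K) := by
    intro p hp
    rw [frontier, (A.finite_toSet.isCompact_convexHull ℝ).isClosed.closure_eq]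
    exact ⟨fun h => h.2, fun h => ⟨subset_convexHull ℝ _ (Finset.mem_coe.2 hp), h⟩⟩
  have hv : ∀ i, vdeg i = ∑ p ∈ A, if p ∈ interior K ∧ degree T p = i then 1 else 0 := by
    intro i
    rw [hvdeg, ← Finset.card_filter, ← Set.ncard_coe_finset]
    congr 1
    ext p
    simp
  have hb : ∀ i, bdeg i = ∑ p ∈ A, if p ∉ interior K ∧ degree T p = i then 1 else 0 := by
    intro i
    rw [hbdeg, ← Finset.card_filter, ← Set.ncard_coe_finset]
    congr 1
    ext p
    simp only [Set.mem_ofPred_eq, Finset.coe_filter]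
    exact and_congr_right fun hp => by rw [hfr p hp]
  have hE : (edges A T).card + 3 ≤ ∑ p ∈ A, if p ∈ interior K then 3 else 2 :=
    edges_bound hT hdim
  have hD := sum_degree hT
  -- `7 - d` for interior and `5 - d` for boundary vertices; truncating these weights at zero
  -- only helps, and the minimal degrees leave no weights other than the listed ones
  have hpt : ∀ p ∈ A, 2 * (if p ∈ interior K then 3 else 2) + 1 ≤ degree T p +
      (4 * (if p ∈ interior K ∧ degree T p = 3 then 1 else 0) +
      3 * (if p ∈ interior K ∧ degree T p = 4 then 1 else 0) +
      2 * (if p ∈ interior K ∧ degree T p = 5 then 1 else 0) +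
      (if p ∈ interior K ∧ degree T p = 6 then 1 else 0) +
      3 * (if p ∉ interior K ∧ degree T p = 2 then 1 else 0) +
      2 * (if p ∉ interior K ∧ degree T p = 3 then 1 else 0) +
      (if p ∉ interior K ∧ degree T p = 4 then 1 else 0)) := by
    intro p hp
    by_cases hi : p ∈ interior K
    · have := three_le_degree hT hp hi
      simp only [hi, if_true, true_and, not_true_eq_false, false_and, if_false]
      split_ifs <;> omega
    · have := two_le_degree hT hdim hp
      simp only [hi, if_false, true_and, not_false_eq_true, false_and]
      split_ifs <;> omega
  have hsum := Finset.sum_le_sum hpt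
  simp only [Finset.sum_add_distrib, ← Finset.mul_sum, ← hv, ← hb, hD] at hsum
  simp only [Finset.sum_const, smul_eq_mul, mul_one] at hsum
  omega
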